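/- The set of natural numbers n for which b_200(125n + 24) ≢ p_17(5n + 2) (mod 2) has natural density zero, and the set of natural numbers n for which b_200(125n + 74) ≢ p_17(5n + 4) (mod 2) has natural density zero. (Here 125n + 24 = 25(5n+2) − 26 and 125n + 74 = 25(5n+4) − 26.) -/

import Mathlib

/-- The number of `m`-regular partitions of `n`, i.e. partitions of `n`
in which no part is divisible by `m`. -/
noncomputable def numRegularPartitions (m n : ℕ) : ℕ :=
  Nat.card {π : n.Partition // ∀ j ∈ π.parts, ¬ m ∣ j}

/-- The number of `t`-multipartitions of `n`, i.e. `t`-tuples of partitions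
whose sizes sum to `n`. -/
noncomputable def numMultipartitions (t n : ℕ) : ℕ :=
  Nat.card {f : Fin t → Σ k : ℕ, k.Partition // (∑ i, (f i).1) = n}

/-!
Let `f = ∏ (1 - Xⁿ)` over `𝔽₂`. The generating functions of `b_200` and `p_17` are `f(X²⁵)⁸ / f`
and `f⁻¹⁷`. Counting integer points on the ellipses `x² + 5y² = M` and `x² + 2y² = M` modulo 4 by
means of reflections gives the modular equation `f f(X⁵) = f⁶ + X f(X⁵)⁶` and the expansion of `f³`.
These determine the 5-dissection of `f⁻¹`, and extracting the exponents `25m + 24` from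
`f(X²⁵)⁸ / f` yields
`X² ∑ b_200(25m + 24) Xᵐ = X² f(X⁵)⁶ f + f⁻¹⁷ + f(X⁵)⁻⁴ f³`.
The last term has no exponents congruent to 2 or 4 modulo 5, so for `m ≡ 0, 2 (mod 5)` the numbers
`b_200(25m + 24)` and `p_17(m + 2)` differ by the `m`-th coefficient of `f(X⁵)⁶ f`, which vanishes
unless `24m + 31 = a² + 30b²`. A prime `p ≡ 7 (mod 120)` dividing `a² + 30b²` divides it twice, and
`∑ 1/p` diverges over these primes, so a sieve shows that such `m` have density zero.
-/

section Squares

open PowerSeries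

theorem mem_range_pentagonal_iff_isSquare {n : ℕ} :
    n ∈ Set.range pentagonal ↔ IsSquare (24 * n + 1) := by
  constructor
  · rintro ⟨k, rfl⟩
    refine ⟨(6 * k - 1).natAbs, ?_⟩
    zify
    rw [abs_mul_abs_self]
    linear_combination 12 * two_mul_natCast_pentagonal k
  · rintro ⟨r, hr⟩
    obtain ⟨q, rfl | rfl⟩ : ∃ q, r = 6 * q + 1 ∨ r = 6 * q + 5 := by
      refine ⟨r / 6, ?_⟩
      have hmod : r % 6 * (r % 6) % 6 = 1 := by rw [← Nat.mul_mod, ← hr]; lia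
      have : r % 6 < 6 := Nat.mod_lt _ (by norm_num)
      interval_cases h : r % 6 <;> lia
    · refine ⟨-q, ?_⟩
      zify at hr ⊢
      linarith [two_mul_natCast_pentagonal (-q)]
    · refine ⟨q + 1, ?_⟩
      zify at hr ⊢
      linarith [two_mul_natCast_pentagonal (q + 1)]

theorem coeff_pentagonalSeries_zmod_two (n : ℕ) [Decidable (IsSquare (24 * n + 1))] :
    coeff n (pentagonalSeries (ZMod 2)) = if IsSquare (24 * n + 1) then 1 else 0 := by
  have h := coeff_pentagonalSeries_eq_zero_iff (ZMod 2) (n := n)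
  rw [mem_range_pentagonal_iff_isSquare] at h
  split_ifs with hsq
  · exact Fin.eq_one_of_ne_zero _ fun h0 ↦ h.1 h0 hsq
  · exact h.2 hsq

end Squares

section Reflection

variable {α : Type*} [DecidableEq α] {S : Finset α} {σ : α → α}

theorem card_modEq_card_fixed_of_involutive (hσ : Function.Involutive σ)
    (hS : ∀ s ∈ S, σ s ∈ S) : S.card ≡ {s ∈ S | σ s = s}.card [MOD 2] := by
  have hmoved : ∑ s ∈ S with σ s ≠ s, (1 : ZMod 2) = 0 :=
    Finset.sum_involution (fun s _ ↦ σ s) (fun _ _ ↦ by decide) (by simp)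
      (fun s hs ↦ by
        simp only [Finset.mem_filter, hσ s] at hs ⊢
        exact ⟨hS s hs.1, hs.2.symm⟩)
      (fun s _ ↦ hσ s)
  rw [← ZMod.natCast_eq_natCast_iff, ← Finset.card_filter_add_card_filter_not (fun s ↦ σ s = s)]
  simpa using hmoved

theorem card_modEq_four_of_reflection [InvolutiveNeg α] {f : α → ℤ}
    (hσ : Function.Involutive σ) (hσS : ∀ s ∈ S, σ s ∈ S) (hnegS : ∀ s ∈ S, -s ∈ S)
    (hfσ : ∀ s, f (σ s) = f s) (hfneg : ∀ s, f (-s) = -f s) :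
    S.card ≡ {s ∈ S | f s = 0}.card + 2 * {s ∈ S | 0 < f s ∧ σ s = s}.card [MOD 4] := by
  have hnegative : {s ∈ S | f s < 0}.card = {s ∈ S | 0 < f s}.card :=
    Finset.card_nbij' (-·) (-·) (fun s ↦ by simpa +contextual [hfneg] using fun h _ ↦ hnegS s h)
      (fun s ↦ by simpa +contextual [hfneg] using fun h _ ↦ hnegS s h)
      (fun s _ ↦ neg_neg s) (fun s _ ↦ neg_neg s)
  have hpositive := card_modEq_card_fixed_of_involutive (S := {s ∈ S | 0 < f s}) hσ
    (by simp +contextual [hfσ, hσS])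
  have hsplit : S.card = {s ∈ S | f s = 0}.card + ({s ∈ S | 0 < f s}.card
      + {s ∈ S | f s < 0}.card) := by
    rw [← Finset.card_filter_add_card_filter_not (f · = 0),
      ← Finset.card_filter_add_card_filter_not (s := {s ∈ S | ¬f s = 0}) (0 < f ·),
      Finset.filter_filter, Finset.filter_filter]
    congr! 4 with s <;> lia
  rw [Finset.filter_filter] at hpositive
  rw [hsplit, hnegative, ← two_mul]
  exact Nat.ModEq.add_left _ (hpositive.mul_left' 2)

end Reflection

section QuadraticReps

/-- The finite set of integer points on the ellipse `x ^ 2 + d * y ^ 2 = M`, for `0 < d`. -/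
noncomputable def ellipsePoints (d M : ℤ) : Finset (ℤ × ℤ) :=
  {p ∈ Finset.Icc (-M) M ×ˢ Finset.Icc (-M) M | p.1 ^ 2 + d * p.2 ^ 2 = M}

variable {d M : ℤ}

theorem mem_ellipsePoints (hd : 0 < d) {p : ℤ × ℤ} :
    p ∈ ellipsePoints d M ↔ p.1 ^ 2 + d * p.2 ^ 2 = M := by
  suffices p.1 ^ 2 + d * p.2 ^ 2 = M →
      ((-M ≤ p.1 ∧ p.1 ≤ M) ∧ -M ≤ p.2 ∧ p.2 ≤ M) by
    simpa [ellipsePoints] using this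
  rintro rfl
  refine ⟨⟨?_, ?_⟩, ?_, ?_⟩ <;>
    nlinarith [sq_nonneg p.2, sq_nonneg p.1, Int.le_self_sq p.1, Int.le_self_sq p.2,
      Int.le_self_sq (-p.1), Int.le_self_sq (-p.2)]

theorem card_ellipsePoints_modEq_four (hd : 0 < d) :
    (ellipsePoints d M).card ≡ {p ∈ ellipsePoints d M | p.1 = 0}.card
      + 2 * {p ∈ ellipsePoints d M | 0 < p.1 ∧ p.2 = 0}.card [MOD 4] := by
  have h := card_modEq_four_of_reflection (S := ellipsePoints d M) (σ := fun p ↦ (p.1, -p.2))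
    (f := Prod.fst) (fun p ↦ by simp) (by simp [mem_ellipsePoints hd])
    (by simp [mem_ellipsePoints hd]) (fun _ ↦ rfl) (fun _ ↦ rfl)
  simpa [Prod.ext_iff, neg_eq_self] using h

variable {e : ℤ}

theorem cases_of_mul_add_one_eq_six (hd : 0 < d) (hde : e * (d + 1) = 6) :
    (d = 5 ∧ e = 1) ∨ (d = 2 ∧ e = 2) ∨ (d = 1 ∧ e = 3) := by
  have he : 0 < e := by nlinarith
  have : e ≤ 3 := by nlinarith
  interval_cases e <;> lia

theorem add_ne_zero_of_sq_add_mul_sq {x y : ℤ} (hd : 0 < d) (hde : e * (d + 1) = 6)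
    (hM : (x ^ 2 + d * y ^ 2) % 4 = 1) : x + y ≠ 0 := by
  intro hsum
  rw [eq_neg_of_add_eq_zero_left hsum, neg_sq] at hM
  rcases Int.even_or_odd' y with ⟨k, rfl | rfl⟩ <;> ring_nf at hM <;>
    rcases cases_of_mul_add_one_eq_six hd hde with ⟨rfl, -⟩ | ⟨rfl, -⟩ | ⟨rfl, -⟩ <;> lia

theorem mul_ne_two_mul_of_sq_add_mul_sq {x y z : ℤ} (hd : 0 < d) (hde : e * (d + 1) = 6)
    (hM : (x ^ 2 + d * y ^ 2) % 4 = 1) (hz : x + y = 3 * z) : e * z ≠ 2 * y := by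
  intro hroot
  rw [eq_sub_of_add_eq hz] at hM
  rcases cases_of_mul_add_one_eq_six hd hde with ⟨rfl, rfl⟩ | ⟨rfl, rfl⟩ | ⟨rfl, rfl⟩
  · obtain rfl : z = 2 * y := by lia
    ring_nf at hM
    lia
  · obtain rfl : z = y := by lia
    ring_nf at hM
    lia
  · obtain ⟨m, rfl, rfl⟩ : ∃ m, z = 2 * m ∧ y = 3 * m := ⟨y - z, by lia, by lia⟩
    ring_nf at hM
    lia

theorem four_dvd_card_ellipsePoints_filter_three_dvd (hd : 0 < d) (hde : e * (d + 1) = 6)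
    (hM : M % 4 = 1) : 4 ∣ {p ∈ ellipsePoints d M | 3 ∣ p.1 + p.2}.card := by
  -- On the line `x + y = 3 * z` the form is quadratic in `y`; `σ` exchanges its two roots.
  let σ : ℤ × ℤ → ℤ × ℤ := fun p ↦
    (p.1 + p.2 - (e * ((p.1 + p.2) / 3) - p.2), e * ((p.1 + p.2) / 3) - p.2)
  have hσsum (p) : (σ p).1 + (σ p).2 = p.1 + p.2 := by simp only [σ]; ring
  have hσS (p) (hp : p ∈ {p ∈ ellipsePoints d M | 3 ∣ p.1 + p.2}) :
      σ p ∈ {p ∈ ellipsePoints d M | 3 ∣ p.1 + p.2} := by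
    simp only [Finset.mem_filter, mem_ellipsePoints hd, hσsum] at hp ⊢
    obtain ⟨hp, z, hz⟩ := hp
    refine ⟨?_, z, hz⟩
    simp only [σ, hz, Int.mul_ediv_cancel_left z three_ne_zero]
    linear_combination hp - (3 * z - p.2 + p.1) * hz + (e * z - 2 * p.2) * z * hde
  have hzero (p) (hp : p ∈ {p ∈ ellipsePoints d M | 3 ∣ p.1 + p.2}) : p.1 + p.2 ≠ 0 :=
    add_ne_zero_of_sq_add_mul_sq hd hde <| by
      rw [(mem_ellipsePoints hd).1 (Finset.mem_filter.1 hp).1, hM]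
  have hfixed (p) (hp : p ∈ {p ∈ ellipsePoints d M | 3 ∣ p.1 + p.2}) : σ p ≠ p := by
    intro hfix
    simp only [Finset.mem_filter, mem_ellipsePoints hd] at hp
    obtain ⟨rfl, z, hz⟩ := hp
    refine mul_ne_two_mul_of_sq_add_mul_sq hd hde hM hz ?_
    have := congrArg Prod.snd hfix
    simp only [σ, hz, Int.mul_ediv_cancel_left z three_ne_zero] at this
    lia
  have h := card_modEq_four_of_reflection (f := fun p ↦ p.1 + p.2) (fun p ↦ by ext <;> simp [σ])
    hσS
    (fun p hp ↦ by
      simpa only [Finset.mem_filter, mem_ellipsePoints hd, Prod.fst_neg, Prod.snd_neg, neg_sq,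
        ← neg_add, dvd_neg] using hp)
    hσsum (fun p ↦ (neg_add _ _).symm)
  rw [Finset.filter_eq_empty_iff.2 hzero,
    Finset.filter_eq_empty_iff.2 fun p hp h ↦ hfixed p hp h.2] at h
  exact Nat.modEq_zero_iff_dvd.1 h

theorem card_ellipsePoints_eq_add_two_mul (hd : 0 < d) :
    (ellipsePoints d M).card = {p ∈ ellipsePoints d M | 3 ∣ p.1 + p.2}.card
      + 2 * {p ∈ ellipsePoints d M | (p.1 + p.2) % 3 = 2}.card := by
  have hneg : {p ∈ ellipsePoints d M | (p.1 + p.2) % 3 = 1}.card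
      = {p ∈ ellipsePoints d M | (p.1 + p.2) % 3 = 2}.card := by
    refine Finset.card_nbij' (-·) (-·) (fun p ↦ ?_) (fun p ↦ ?_) (fun p _ ↦ neg_neg p)
      (fun p _ ↦ neg_neg p) <;>
    · simp only [Finset.coe_filter, Set.mem_ofPred_eq, mem_ellipsePoints hd, Prod.fst_neg,
        Prod.snd_neg, neg_sq, and_imp]
      exact fun h h' ↦ ⟨h, by lia⟩
  rw [two_mul]
  nth_rw 1 [← hneg]
  rw [← Finset.card_filter_add_card_filter_not (s := ellipsePoints d M) (fun p ↦ 3 ∣ p.1 + p.2),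
    ← Finset.card_filter_add_card_filter_not (s := {p ∈ ellipsePoints d M | ¬3 ∣ p.1 + p.2})
      (fun p ↦ (p.1 + p.2) % 3 = 1), Finset.filter_filter, Finset.filter_filter]
  congr! 4 with s <;> lia

theorem card_ellipsePoints_filter_fst_eq_zero {d M : ℕ} (hd : 0 < d) (hM : 0 < M)
    [Decidable (∃ y, d * y ^ 2 = M)] :
    {p ∈ ellipsePoints d M | p.1 = 0}.card = if ∃ y, d * y ^ 2 = M then 2 else 0 := by
  have hmem (p : ℤ × ℤ) : p ∈ {p ∈ ellipsePoints d M | p.1 = 0} ↔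
      p.1 = 0 ∧ d * p.2.natAbs ^ 2 = M := by
    rw [Finset.mem_filter, mem_ellipsePoints (mod_cast hd), and_comm]
    zify
    grind [sq_abs]
  split_ifs with h
  · obtain ⟨y, rfl⟩ := h
    have hy : (y : ℤ) ≠ 0 := by rintro h; simp_all
    rw [Finset.card_eq_two]
    refine ⟨(0, y), (0, -y), by simpa [Prod.ext_iff] using (neg_ne_self.2 hy).symm, ?_⟩
    ext ⟨x, z⟩
    rw [hmem]
    simp [hd.ne', Int.natAbs_eq_iff, ← and_or_left]
  · exact Finset.card_eq_zero.2 (Finset.eq_empty_of_forall_notMem fun p hp ↦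
      h ⟨_, ((hmem p).1 hp).2⟩)

theorem card_ellipsePoints_filter_snd_eq_zero {d M : ℕ} (hd : 0 < d) (hM : 0 < M)
    [Decidable (IsSquare M)] :
    {p ∈ ellipsePoints d M | 0 < p.1 ∧ p.2 = 0}.card = if IsSquare M then 1 else 0 := by
  have hmem (p : ℤ × ℤ) : p ∈ {p ∈ ellipsePoints d M | 0 < p.1 ∧ p.2 = 0} ↔
      p.2 = 0 ∧ 0 < p.1 ∧ p.1.natAbs * p.1.natAbs = M := by
    rw [Finset.mem_filter, mem_ellipsePoints (mod_cast hd)]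
    zify
    grind [sq_abs]
  split_ifs with h
  · obtain ⟨r, rfl⟩ := h
    have hr : 0 < r := by nlinarith
    rw [Finset.card_eq_one]
    refine ⟨(r, 0), ?_⟩
    ext ⟨x, z⟩
    simp only [hmem, Nat.mul_self_inj, Finset.mem_singleton, Prod.mk.injEq]
    lia
  · exact Finset.card_eq_zero.2 (Finset.eq_empty_of_forall_notMem fun p hp ↦
      h ⟨_, ((hmem p).1 hp).2.2.symm⟩)

end QuadraticReps

section PentagonalPairs

open PowerSeries

variable {d e n : ℕ}

/-- The pairs of exponents `(i, j)` of `f * f(X ^ d)` with `i + j = n`, where `f` is the pentagonal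
number series. -/
noncomputable def pentagonalPairs (d n : ℕ) : Finset (ℕ × ℕ) :=
  open scoped Classical in
  {q ∈ Finset.HasAntidiagonal.antidiagonal n |
    q.1 ∈ Set.range pentagonal ∧ ∃ k, d * pentagonal k = q.2}

theorem coeff_pentagonalSeries_mul_expand (hd : d ≠ 0) :
    coeff n (pentagonalSeries (ZMod 2) * expand d hd (pentagonalSeries (ZMod 2)))
      = (pentagonalPairs d n).card := by
  classical
  rw [coeff_mul, pentagonalPairs, Finset.card_filter, Nat.cast_sum]
  refine Finset.sum_congr rfl fun q _ ↦ ?_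
  have hfst : coeff q.1 (pentagonalSeries (ZMod 2))
      = if q.1 ∈ Set.range pentagonal then 1 else 0 := by
    simp only [coeff_pentagonalSeries_zmod_two, mem_range_pentagonal_iff_isSquare]
  have hsnd : coeff q.2 (expand d hd (pentagonalSeries (ZMod 2)))
      = if ∃ k, d * pentagonal k = q.2 then 1 else 0 := by
    simp only [coeff_expand, coeff_pentagonalSeries_zmod_two, ← ite_and,
      ← mem_range_pentagonal_iff_isSquare]
    refine if_congr ⟨?_, ?_⟩ rfl rfl
    · rintro ⟨hdvd, k, hk⟩
      exact ⟨k, by rw [hk, Nat.mul_div_cancel' hdvd]⟩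
    · rintro ⟨k, hk⟩
      rw [← hk, Nat.mul_div_cancel_left _ (Nat.pos_of_ne_zero hd)]
      exact ⟨⟨_, rfl⟩, k, rfl⟩
  rw [hfst, hsnd]
  split_ifs <;> simp_all

theorem sq_add_mul_sq_eq_iff_pentagonal {x y j k : ℤ} (hde : e * (d + 1) = 6)
    (hj : x - d * y = 6 * j - 1) (hk : x + y = 6 * k - 1) :
    x ^ 2 + d * y ^ 2 = 4 * e * n + 1 ↔ pentagonal j + d * pentagonal k = n := by
  have hj' := two_mul_natCast_pentagonal j
  have hk' := two_mul_natCast_pentagonal k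
  zify at hde ⊢
  have key : ((d : ℤ) + 1) * (x ^ 2 + d * y ^ 2 - (4 * e * n + 1))
      = 24 * (pentagonal j + d * pentagonal k - n) := by
    linear_combination (x - d * y + 6 * j - 1) * hj + d * (x + y + 6 * k - 1) * hk
      - 12 * hj' - 12 * d * hk' - 4 * n * hde
  rw [← sub_eq_zero, ← sub_eq_zero (b := (n : ℤ))]
  refine ⟨fun h ↦ ?_, fun h ↦ ?_⟩
  · simpa [h] using key.symm
  · exact (mul_eq_zero.1 (by simpa [h] using key)).resolve_left (by positivity)

theorem exists_eq_six_mul_sub_one {x y : ℤ} (hd3 : 3 ∣ d + 1) (hde : e * (d + 1) = 6)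
    (hxy : x ^ 2 + d * y ^ 2 = 4 * e * n + 1) (h : (x + y) % 3 = 2) :
    ∃ j k, x - d * y = 6 * j - 1 ∧ x + y = 6 * k - 1 := by
  have hcases : (d = 2 ∧ e = 2) ∨ (d = 5 ∧ e = 1) := by
    have : d ≤ 5 := Nat.succ_le_succ_iff.1 (Nat.le_of_dvd (by norm_num) (Dvd.intro_left _ hde))
    interval_cases d <;> lia
  have hparity : (x + y) % 2 = 1 ∧ (x - d * y) % 2 = 1 := by
    rcases Int.even_or_odd' x with ⟨a, rfl | rfl⟩ <;>
      rcases Int.even_or_odd' y with ⟨b, rfl | rfl⟩ <;>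
      rcases hcases with ⟨rfl, rfl⟩ | ⟨rfl, rfl⟩ <;> push_cast at hxy ⊢ <;> ring_nf at hxy <;> lia
  have hthree : (x - d * y) % 3 = 2 := by
    rcases hcases with ⟨rfl, -⟩ | ⟨rfl, -⟩ <;> push_cast <;> lia
  exact ⟨(x - d * y + 1) / 6, (x + y + 1) / 6, by lia, by lia⟩

theorem card_pentagonalPairs (hd3 : 3 ∣ d + 1) (hde : e * (d + 1) = 6) :
    (pentagonalPairs d n).card =
      {p ∈ ellipsePoints d (4 * e * n + 1) | (p.1 + p.2) % 3 = 2}.card := by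
  have hd0 : d ≠ 0 := by rintro rfl; lia
  have hmem {p : ℤ × ℤ} := mem_ellipsePoints (M := 4 * e * n + 1) (p := p)
    (mod_cast Nat.pos_of_ne_zero hd0 : (0 : ℤ) < d)
  symm
  refine Finset.card_nbij
    (fun p ↦ (pentagonal ((p.1 - d * p.2 + 1) / 6), d * pentagonal ((p.1 + p.2 + 1) / 6)))
    (fun p hp ↦ ?_) (fun p hp q hq hpq ↦ ?_) (fun q hq ↦ ?_)
  · rw [Finset.mem_coe, Finset.mem_filter, hmem] at hp
    obtain ⟨j, k, hj, hk⟩ := exists_eq_six_mul_sub_one hd3 hde hp.1 hp.2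
    obtain rfl : j = (p.1 - d * p.2 + 1) / 6 := by lia
    obtain rfl : k = (p.1 + p.2 + 1) / 6 := by lia
    have := (sq_add_mul_sq_eq_iff_pentagonal hde hj hk).1 hp.1
    simpa [pentagonalPairs, hd0]
  · rw [Finset.mem_coe, Finset.mem_filter, hmem] at hp hq
    obtain ⟨j, k, hj, hk⟩ := exists_eq_six_mul_sub_one hd3 hde hp.1 hp.2
    obtain ⟨j', k', hj', hk'⟩ := exists_eq_six_mul_sub_one hd3 hde hq.1 hq.2
    simp only [Prod.mk.injEq, hj, hj', hk, hk', sub_add_cancel, mul_right_inj' hd0,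
      pentagonal_injective.eq_iff, Int.mul_ediv_cancel_left _ (show (6 : ℤ) ≠ 0 by norm_num)] at hpq
    obtain ⟨rfl, rfl⟩ := hpq
    have hsnd : p.2 = q.2 := mul_left_cancel₀ (show (d + 1 : ℤ) ≠ 0 by positivity)
      (by linear_combination hk - hk' - hj + hj')
    exact Prod.ext (by lia) hsnd
  · simp only [pentagonalPairs, Finset.coe_filter, Set.mem_ofPred_eq,
      Finset.HasAntidiagonal.mem_antidiagonal] at hq
    obtain ⟨hsum, ⟨j, hj⟩, k, hk⟩ := hq
    have hx : (e * (j + d * k) - 1 : ℤ) - d * (e * (k - j)) = 6 * j - 1 := by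
      zify at hde; linear_combination j * hde
    have hy : (e * (j + d * k) - 1 : ℤ) + e * (k - j) = 6 * k - 1 := by
      zify at hde; linear_combination k * hde
    refine ⟨(e * (j + d * k) - 1, e * (k - j)), ?_, ?_⟩
    · rw [Finset.mem_coe, Finset.mem_filter, hmem]
      refine ⟨(sq_add_mul_sq_eq_iff_pentagonal hde hx hy).2 (by rw [hj, hk, hsum]), ?_⟩
      simp only [hy]
      lia
    · simp [hx, hy, hj, hk]

open scoped Classical in
theorem coeff_pentagonalSeries_mul_expand_eq (hd : d ≠ 0) (hd3 : 3 ∣ d + 1)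
    (hde : e * (d + 1) = 6) :
    coeff n (pentagonalSeries (ZMod 2) * expand d hd (pentagonalSeries (ZMod 2)))
      = (if IsSquare (4 * e * n + 1) then 1 else 0)
        + if ∃ y, d * y ^ 2 = 4 * e * n + 1 then 1 else 0 := by
  have hd0 : 0 < d := Nat.pos_of_ne_zero hd
  have hreflect := card_ellipsePoints_modEq_four (d := d) (M := ↑(4 * e * n + 1)) (mod_cast hd0)
  rw [card_ellipsePoints_filter_fst_eq_zero hd0 (by lia),
    card_ellipsePoints_filter_snd_eq_zero hd0 (by lia),
    card_ellipsePoints_eq_add_two_mul (mod_cast hd0)] at hreflect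
  have hdvd := four_dvd_card_ellipsePoints_filter_three_dvd (d := d) (e := e)
    (M := ↑(4 * e * n + 1)) (mod_cast hd0) (mod_cast hde) (by push_cast; lia)
  rw [coeff_pentagonalSeries_mul_expand, card_pentagonalPairs hd3 hde]
  have : {p ∈ ellipsePoints d (4 * e * n + 1) | (p.1 + p.2) % 3 = 2}.card
      ≡ (if IsSquare (4 * e * n + 1) then 1 else 0)
        + (if ∃ y, d * y ^ 2 = 4 * e * n + 1 then 1 else 0) [MOD 2] := by
    rw [Nat.ModEq] at hreflect ⊢
    push_cast at hreflect hdvd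
    split_ifs at hreflect ⊢ <;> lia
  simpa using (ZMod.natCast_eq_natCast_iff _ _ _).2 this

end PentagonalPairs

section Dissection

open PowerSeries

variable {R : Type*} [CommRing R] {m : ℕ}

/-- The `k`-th component of the `m`-dissection of a power series: the linear operator
`∑ aₙ Xⁿ ↦ ∑ aₘₙ₊ₖ Xⁿ`. -/
noncomputable def dissect (m k : ℕ) : R⟦X⟧ →ₗ[R] R⟦X⟧ where
  toFun F := mk fun n ↦ coeff (m * n + k) F
  map_add' F G := by ext; simp
  map_smul' a F := by ext; simp

@[simp]
theorem coeff_dissect (k n : ℕ) (F : R⟦X⟧) :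
    coeff n (dissect m k F) = coeff (m * n + k) F := by simp [dissect]

theorem dissect_X_pow_mul {j k r c : ℕ} (hr : r < m) (h : r + j = k + m * c) (F : R⟦X⟧) :
    dissect m k (X ^ j * F) = X ^ c * dissect m r F := by
  ext n
  rw [coeff_dissect, coeff_X_pow_mul', coeff_X_pow_mul']
  by_cases hcn : c ≤ n
  · obtain ⟨l, rfl⟩ := Nat.exists_eq_add_of_le hcn
    rw [if_pos (by rw [mul_add]; lia), if_pos hcn, coeff_dissect, Nat.add_sub_cancel_left]
    congr 2
    rw [mul_add]
    lia
  · have hmn : m * (n + 1) ≤ m * c := Nat.mul_le_mul_left m (by lia)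
    rw [mul_add] at hmn
    rw [if_neg (by lia), if_neg hcn]

theorem dissect_expand_of_coprime {p k r c : ℕ} (hp : p ≠ 0) (hpm : p.Coprime m) (hk : k < m)
    (h : p * k = r + m * c) (F : R⟦X⟧) :
    dissect m r (expand p hp F) = X ^ c * expand p hp (dissect m k F) := by
  ext n
  rw [coeff_dissect, coeff_X_pow_mul']
  split_ifs with hcn
  · obtain ⟨l, rfl⟩ := Nat.exists_eq_add_of_le hcn
    have hadd : m * (c + l) + r = m * l + p * k := by rw [h, mul_add]; ring
    have hdvd : p ∣ m * l + p * k ↔ p ∣ l := by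
      rw [← Nat.dvd_add_iff_left (dvd_mul_right p k), hpm.dvd_mul_left]
    rw [hadd, Nat.add_sub_cancel_left, coeff_expand, coeff_expand]
    refine ite_congr (propext hdvd) (fun hl ↦ ?_) fun _ ↦ rfl
    obtain ⟨t, rfl⟩ := hl
    have hpos := Nat.pos_of_ne_zero hp
    rw [coeff_dissect, mul_left_comm, ← mul_add, Nat.mul_div_cancel_left _ hpos,
      Nat.mul_div_cancel_left _ hpos]
  · refine coeff_expand_of_not_dvd p hp _ ?_
    rintro ⟨s, hs⟩
    obtain ⟨d, rfl⟩ := Nat.exists_eq_add_of_lt (not_le.1 hcn)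
    have hsk : s < k := by
      refine lt_of_mul_lt_mul_left (?_ : p * s < p * k) (Nat.zero_le p)
      rw [h, ← hs, mul_add, mul_add]
      lia
    obtain ⟨e, rfl⟩ := Nat.exists_eq_add_of_lt hsk
    have hme : m ∣ p * (e + 1) := ⟨d + 1, by linear_combination h + hs⟩
    have := Nat.le_of_dvd e.succ_pos ((hpm.symm.dvd_mul_left).1 hme)
    lia

theorem sum_X_pow_mul_expand_dissect (hm : m ≠ 0) (F : R⟦X⟧) :
    ∑ k ∈ Finset.range m, X ^ k * expand m hm (dissect m k F) = F := by
  ext n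
  simp only [map_sum, coeff_X_pow_mul', coeff_expand, coeff_dissect]
  have hpos := Nat.pos_of_ne_zero hm
  rw [Finset.sum_eq_single (n % m)]
  · rw [if_pos (Nat.mod_le n m), if_pos (Nat.dvd_sub_mod n)]
    congr 2
    rw [Nat.mul_div_cancel' (Nat.dvd_sub_mod n)]
    exact Nat.sub_add_cancel (Nat.mod_le n m)
  · intro k hk hne
    split_ifs with hkn hdvd
    · refine (hne ?_).elim
      rw [← (Nat.modEq_iff_dvd' hkn).2 hdvd, Nat.mod_eq_of_lt (Finset.mem_range.1 hk)]
    all_goals rfl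
  · simp [Nat.mod_lt n hpos]

theorem dissect_X_pow_mul_expand {k r : ℕ} (hk : k < m) (hr : r < m) (F : R⟦X⟧) :
    dissect m k (X ^ r * expand m (Nat.ne_zero_of_lt hk) F) = if r = k then F else 0 := by
  ext n
  rw [coeff_dissect, coeff_X_pow_mul', coeff_expand, ← ite_and]
  split_ifs with h hrk hrk
  · rw [hrk, Nat.add_sub_cancel, Nat.mul_div_cancel_left _ (Nat.zero_lt_of_lt hk)]
  · refine (hrk ?_).elim
    have := (Nat.modEq_iff_dvd' h.1).2 h.2
    rwa [Nat.ModEq, Nat.mul_add_mod, Nat.mod_eq_of_lt hr, Nat.mod_eq_of_lt hk] at this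
  · exact (h ⟨by lia, by simp [hrk]⟩).elim
  · rw [map_zero]

theorem expand_injective (hm : m ≠ 0) : Function.Injective (expand (R := R) m hm) := by
  intro F G h
  ext n
  simpa only [coeff_expand_mul] using congrArg (coeff (m * n)) h

theorem dissect_sum_X_pow_mul_expand {k : ℕ} (hk : k < m) (F : ℕ → R⟦X⟧) :
    dissect m k (∑ r ∈ Finset.range m, X ^ r * expand m (Nat.ne_zero_of_lt hk) (F r)) = F k := by
  rw [map_sum, Finset.sum_congr rfl fun r hr ↦
    dissect_X_pow_mul_expand hk (Finset.mem_range.1 hr) _]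
  simp [hk]

theorem dissect_expand_mul {k : ℕ} (hk : k < m) (F G : R⟦X⟧) :
    dissect m k (expand m (Nat.ne_zero_of_lt hk) F * G) = F * dissect m k G := by
  conv_lhs => rw [← sum_X_pow_mul_expand_dissect (Nat.ne_zero_of_lt hk) G, Finset.mul_sum]
  simp_rw [mul_left_comm _ (X ^ _), ← map_mul]
  exact dissect_sum_X_pow_mul_expand hk fun r ↦ F * dissect m r G

end Dissection

section GeneratingFunctions

open PowerSeries
open scoped PowerSeries.WithPiTopology

section Topological

variable {R : Type*} [CommRing R] [TopologicalSpace R]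

theorem continuous_expand {p : ℕ} (hp : p ≠ 0) : Continuous (expand (R := R) p hp) := by
  refine continuous_iff_continuousAt.2 fun F ↦
    (WithPiTopology.tendsto_iff_coeff_tendsto _ _ _ _).2 fun d ↦ ?_
  simp only [coeff_expand]
  split_ifs
  · exact (WithPiTopology.continuous_coeff R _).tendsto F
  · exact tendsto_const_nhds

theorem hasProd_expand_pentagonalSeries {p : ℕ} (hp : p ≠ 0) :
    HasProd (fun n ↦ if p ∣ n + 1 then 1 - X ^ (n + 1) else 1)
      (expand p hp (pentagonalSeries R)) := by
  have hprod := (WithPiTopology.hasProd_one_sub_X_pow R).map (expand p hp) (continuous_expand hp)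
  have hpos (n : ℕ) : p * (n + 1) - 1 + 1 = p * (n + 1) :=
    Nat.sub_add_cancel (Nat.mul_pos (Nat.pos_of_ne_zero hp) n.succ_pos)
  have hinj : Function.Injective fun n ↦ p * (n + 1) - 1 := fun a b hab ↦ by
    have := congrArg (· + 1) hab
    simpa [hpos, hp] using this
  rw [← hinj.hasProd_iff]
  · refine (congrArg (HasProd · _) (funext fun n ↦ ?_)).mpr hprod
    simp [hpos, expand_X, pow_mul]
  · rintro n hn
    refine if_neg fun ⟨c, hc⟩ ↦ hn ?_
    obtain ⟨k, rfl⟩ := Nat.exists_eq_succ_of_ne_zero (n := c) (by rintro rfl; lia)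
    exact ⟨k, by simp only; lia⟩

variable [IsTopologicalRing R] [T2Space R]

theorem hasProd_mk_card_restricted_mul_pentagonalSeries (P : ℕ → Prop) [DecidablePred P] :
    HasProd (fun n ↦ if P (n + 1) then 1 else 1 - X ^ (n + 1))
      ((mk fun n ↦ ((Nat.Partition.restricted n P).card : R)) * pentagonalSeries R) := by
  refine (congrArg (HasProd · _) (funext fun n ↦ ?_)).mpr
    ((Nat.Partition.hasProd_powerSeriesMk_card_restricted R P).mul
      (WithPiTopology.hasProd_one_sub_X_pow R))
  split_ifs
  · simp_rw [pow_mul]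
    rw [WithPiTopology.tsum_pow_mul_one_sub_of_constantCoeff_eq_zero (by simp)]
  · rw [one_mul]

end Topological

variable {R : Type*} [CommRing R]

theorem mk_numRegularPartitions_mul_pentagonalSeries {m : ℕ} (hm : m ≠ 0) :
    (mk fun n ↦ (numRegularPartitions m n : R)) * pentagonalSeries R =
      expand m hm (pentagonalSeries R) := by
  let _ : TopologicalSpace R := ⊥
  have : DiscreteTopology R := ⟨rfl⟩
  have hcard (n : ℕ) :
      numRegularPartitions m n = (Nat.Partition.restricted n fun j ↦ ¬m ∣ j).card := by
    rw [numRegularPartitions, Nat.card_eq_fintype_card, Fintype.card_subtype]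
    rfl
  simp only [hcard]
  refine (hasProd_mk_card_restricted_mul_pentagonalSeries _).unique ?_
  simpa only [ite_not] using hasProd_expand_pentagonalSeries hm

theorem mk_card_partition_mul_pentagonalSeries :
    (mk fun n ↦ (Fintype.card n.Partition : R)) * pentagonalSeries R = 1 := by
  let _ : TopologicalSpace R := ⊥
  have : DiscreteTopology R := ⟨rfl⟩
  have h := hasProd_mk_card_restricted_mul_pentagonalSeries (R := R) fun _ ↦ True
  simp only [if_true] at h
  simpa [Nat.Partition.restricted] using h.unique hasProd_one

/-- A `t`-multipartition of `n` is a choice of sizes summing to `n` together with a partition of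
each size. -/
def multipartitionEquiv (t n : ℕ) :
    {f : Fin t → Σ k : ℕ, k.Partition // ∑ i, (f i).1 = n} ≃
      Σ l : Finset.piAntidiag (Finset.univ : Finset (Fin t)) n, ∀ i, (l.1 i).Partition where
  toFun f := ⟨⟨fun i ↦ (f.1 i).1, by simpa using f.2⟩, fun i ↦ (f.1 i).2⟩
  invFun g := ⟨fun i ↦ ⟨g.1.1 i, g.2 i⟩, (Finset.mem_piAntidiag.1 g.1.2).1⟩
  left_inv _ := rfl
  right_inv _ := rfl

theorem mk_numMultipartitions (t : ℕ) :
    (mk fun n ↦ (numMultipartitions t n : R)) =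
      (mk fun n ↦ (Fintype.card n.Partition : R)) ^ t := by
  ext n
  rw [coeff_mk, numMultipartitions, Nat.card_congr (multipartitionEquiv t n),
    Nat.card_eq_fintype_card, Fintype.card_sigma]
  simp only [Fintype.card_pi]
  rw [Finset.sum_coe_sort (Finset.piAntidiag Finset.univ n)
    (fun l ↦ ∏ i, Fintype.card (l i).Partition), ← Fin.prod_const, coeff_prod]
  push_cast
  simp only [coeff_mk]
  exact Finset.sum_bij' (fun l _ ↦ Finsupp.equivFunOnFinite.symm l) (fun l _ ↦ ⇑l)
    (by simp [Finset.mem_finsuppAntidiag]) (by simp [Finset.mem_finsuppAntidiag])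
    (fun _ _ ↦ rfl) (fun _ _ ↦ by ext; rfl) fun _ _ ↦ rfl

end GeneratingFunctions

section CharTwoIdentities

variable {R : Type*} [CommRing R] [CharP R 2] {a b c v x u : R}

/-- The product of the four nontrivial conjugates `a + ζ b + ζ² c`, `ζ⁵ = 1`, of `a + b + c` when
`a * c = b ^ 2`. -/
def quinticCofactor (a b c : R) : R :=
  a ^ 4 + a ^ 3 * b + a * b ^ 3 + b ^ 4 + b ^ 3 * c + b * c ^ 3 + c ^ 4

theorem add_add_mul_quinticCofactor (h : a * c = b ^ 2) :
    (a + b + c) * quinticCofactor a b c = a ^ 5 + b ^ 5 + c ^ 5 := by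
  grind [quinticCofactor]

theorem add_add_pow_five_add (h : a * c = b ^ 2) :
    (a + b + c) ^ 5 + b * quinticCofactor a b c = a ^ 5 + c ^ 5 := by
  grind [quinticCofactor]

/- In the application `v`, `w` and `x` are `f(X⁵)`, `f(X²⁵)` and `X`, and `a + b + c` is the
5-dissection of `f`. -/
theorem add_mul_add_pow_five_add_eq_zero {w : R} (hac : a * c = b ^ 2) (hb : b = x * w)
    (hv : (a + b + c) * v = (a + b + c) ^ 6 + x * v ^ 6) (hw : v ^ 6 = w * (v + x ^ 5 * w ^ 5)) :
    (a + c) * (v + (a ^ 5 + c ^ 5)) = 0 := by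
  have hb6 : x * v ^ 6 = b * (v + b ^ 5) := by rw [hw, hb]; ring
  have hfive := add_add_pow_five_add hac
  have hnorm := add_add_mul_quinticCofactor hac
  rw [add_right_comm (a ^ 5)] at hnorm
  have hadd : a + c = a + b + c + b := by
    linear_combination -b * CharTwo.two_eq_zero (R := R)
  rw [hadd]
  generalize a + b + c = u, quinticCofactor a b c = q, a ^ 5 + c ^ 5 = s at *
  linear_combination hv + hb6 - u * hfive - b * hnorm +
    (b * v + u ^ 6 + u * b * q) * CharTwo.two_eq_zero (R := R)

/- The left-hand side is that of `dissect_two_cube` for the cofactor of `f`, where `u`, `v` and `x`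
are `f`, `f(X⁵)` and `X`, and `a`, `c` are the components `0` and `2` of `f`. -/
theorem quintic_cofactor_cube_identity (hac : a * c = v ^ 2) (hu : a ^ 5 + x ^ 2 * c ^ 5 = u)
    (hv : u * v = u ^ 6 + x * v ^ 6) :
    (a ^ 4 + x * (v ^ 3 * c)) * (a ^ 3 * v) ^ 2 + x * (v * c ^ 3) * (a ^ 4 + x * (v ^ 3 * c)) ^ 2
      + x * (a ^ 3 * v * (a * v ^ 3 + x * c ^ 4) ^ 2
        + (a * v ^ 3 + x * c ^ 4) * (x * (v * c ^ 3)) ^ 2) + x ^ 2 * (v ^ 4) ^ 3 =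
      x ^ 2 * v ^ 12 + x * v ^ 6 * u ^ 6 + u ^ 12 := by
  have hn : v * (u + x * v ^ 5) = u ^ 6 := by grind
  calc _ = x ^ 2 * v ^ 12 + x * v ^ 6 * (v * (u + x * v ^ 5)) + (v * (u + x * v ^ 5)) ^ 2 := by
        subst hu
        clear hn hv
        grind
    _ = _ := by rw [hn]; ring

theorem pow_twenty_six_mul_sq_eq (h : u * v = u ^ 6 + x * v ^ 6) :
    u ^ 6 * v ^ 6 + x ^ 4 * v ^ 24 * u ^ 12 + x ^ 6 * v ^ 36 = u ^ 26 * v ^ 2 := by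
  have hsq : (u * v) ^ 2 = u ^ 12 + x ^ 2 * v ^ 12 := by
    rw [h, CharTwo.add_sq]
    ring
  have hfour : u ^ 24 = (u * v) ^ 4 + x ^ 4 * v ^ 24 := by
    have hu : u ^ 6 = u * v + x * v ^ 6 := by rw [h, CharTwo.add_cancel_right]
    rw [pow_mul u 6 4, hu, pow_mul (_ + _) 2 2, CharTwo.add_sq, CharTwo.add_sq]
    ring
  calc u ^ 6 * v ^ 6 + x ^ 4 * v ^ 24 * u ^ 12 + x ^ 6 * v ^ 36
      = (u * v) ^ 6 + x ^ 4 * v ^ 24 * (u ^ 12 + x ^ 2 * v ^ 12) := by ring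
    _ = ((u * v) ^ 4 + x ^ 4 * v ^ 24) * (u * v) ^ 2 := by rw [← hsq]; ring
    _ = u ^ 26 * v ^ 2 := by rw [← hfour]; ring

end CharTwoIdentities

section ModTwo

open PowerSeries

local notation "f₁" => pentagonalSeries (ZMod 2)
local notation "σ₅" => expand (R := ZMod 2) 5 (by norm_num)
local notation "U₅" => dissect (R := ZMod 2) 5

instance charP_powerSeries (R : Type*) [CommRing R] (p : ℕ) [CharP R p] : CharP R⟦X⟧ p :=
  charP_of_injective_ringHom C_injective p

theorem pow_char_eq_expand {p : ℕ} [hp : Fact p.Prime] (F : (ZMod p)⟦X⟧) :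
    F ^ p = expand p hp.out.ne_zero F := by
  have h := MvPowerSeries.map_frobenius_expand (R := ZMod p) p hp.out.ne_zero (f := F)
  rw [ZMod.frobenius_zmod] at h
  exact h.symm.trans (by simp; rfl)

theorem coeff_pentagonalSeries_cube (n : ℕ) :
    coeff n (pentagonalSeries (ZMod 2) ^ 3) = if IsSquare (8 * n + 1) then 1 else 0 := by
  have hnot : ¬∃ y, 2 * y ^ 2 = 8 * n + 1 := by rintro ⟨y, hy⟩; lia
  have h := coeff_pentagonalSeries_mul_expand_eq (n := n) (d := 2) (e := 2) two_ne_zero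
    (by norm_num) (by norm_num)
  rw [← pow_char_eq_expand, ← pow_succ', if_neg hnot, add_zero] at h
  convert h

theorem two_dvd_of_isSquare_four_mul_add_one {n : ℕ} (h : IsSquare (4 * n + 1)) : 2 ∣ n := by
  obtain ⟨r, hr⟩ := h
  obtain ⟨s, rfl⟩ : Odd r := by
    rw [← Nat.not_even_iff_odd]
    rintro ⟨s, rfl⟩
    lia
  obtain ⟨t, ht⟩ := (Nat.even_mul_succ_self s).two_dvd
  exact ⟨t, by lia⟩

theorem coeff_pentagonalSeries_pow_six (n : ℕ) :
    coeff n (pentagonalSeries (ZMod 2) ^ 6) = if IsSquare (4 * n + 1) then 1 else 0 := by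
  rw [show 6 = 3 * 2 from rfl, pow_mul, pow_char_eq_expand, coeff_expand,
    coeff_pentagonalSeries_cube]
  rw [← ite_and]
  refine if_congr ⟨fun ⟨hdvd, hsq⟩ ↦ ?_, fun hsq ↦ ?_⟩ rfl rfl
  · obtain ⟨l, rfl⟩ := hdvd
    rwa [show 4 * (2 * l) + 1 = 8 * (2 * l / 2) + 1 by lia]
  · have hdvd := two_dvd_of_isSquare_four_mul_add_one hsq
    exact ⟨hdvd, by rwa [show 8 * (n / 2) + 1 = 4 * n + 1 by lia]⟩

theorem exists_five_mul_sq_eq_iff {n : ℕ} :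
    (∃ y, 5 * y ^ 2 = 4 * (n + 1) + 1) ↔ 5 ∣ n ∧ IsSquare (4 * (n / 5) + 1) := by
  constructor
  · rintro ⟨y, hy⟩
    obtain ⟨m, rfl⟩ : 5 ∣ n := by lia
    exact ⟨⟨m, rfl⟩, y, by rw [Nat.mul_div_cancel_left _ (by norm_num)]; lia⟩
  · rintro ⟨⟨m, rfl⟩, y, hy⟩
    rw [Nat.mul_div_cancel_left _ (by norm_num)] at hy
    exact ⟨y, by lia⟩

theorem pentagonalSeries_modular_equation :
    pentagonalSeries (ZMod 2) * expand 5 (by norm_num) (pentagonalSeries (ZMod 2)) =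
      pentagonalSeries (ZMod 2) ^ 6
        + X * expand 5 (by norm_num) (pentagonalSeries (ZMod 2)) ^ 6 := by
  classical
  ext n
  rw [coeff_pentagonalSeries_mul_expand_eq (e := 1) _ (by norm_num) (by norm_num), map_add,
    coeff_pentagonalSeries_pow_six, ← map_pow]
  congr 1
  cases n with
  | zero =>
    rw [coeff_zero_X_mul, if_neg]
    rintro ⟨y, hy⟩
    lia
  | succ n =>
    simp only [coeff_succ_X_mul, coeff_expand, coeff_pentagonalSeries_pow_six, ← ite_and]
    exact if_congr exists_five_mul_sq_eq_iff rfl rfl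

theorem not_isSquare_of_mod_five {N : ℕ} (h : N % 5 = 2 ∨ N % 5 = 3) : ¬IsSquare N := by
  rintro ⟨r, rfl⟩
  rw [Nat.mul_mod] at h
  have := Nat.mod_lt r (show 5 > 0 by norm_num)
  interval_cases r % 5 <;> simp_all

theorem isSquare_one_hundred_twenty_mul_add {t : ℕ} :
    IsSquare (24 * (5 * t + 1) + 1) ↔ 5 ∣ t ∧ IsSquare (24 * (t / 5) + 1) := by
  constructor
  · rintro ⟨r, hr⟩
    obtain ⟨s, rfl⟩ : 5 ∣ r := by
      have : 5 ∣ r * r := by lia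
      exact (or_self_iff.1 ((by norm_num : Nat.Prime 5).dvd_mul.1 this))
    obtain ⟨m, rfl⟩ : 5 ∣ t := by lia
    exact ⟨⟨m, rfl⟩, s, by rw [Nat.mul_div_cancel_left _ (by norm_num)]; lia⟩
  · rintro ⟨⟨m, rfl⟩, s, hs⟩
    rw [Nat.mul_div_cancel_left _ (by norm_num)] at hs
    exact ⟨5 * s, by lia⟩

theorem dissect_one_pentagonalSeries : U₅ 1 f₁ = σ₅ f₁ := by
  ext t
  simp only [coeff_dissect, coeff_expand, coeff_pentagonalSeries_zmod_two, ← ite_and]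
  exact if_congr isSquare_one_hundred_twenty_mul_add rfl rfl

theorem dissect_pentagonalSeries_eq_zero {k : ℕ} (hk : k = 3 ∨ k = 4) : U₅ k f₁ = 0 := by
  ext t
  rw [coeff_dissect, coeff_pentagonalSeries_zmod_two, map_zero,
    if_neg (not_isSquare_of_mod_five (by lia))]

theorem dissect_pentagonalSeries_cube_eq_zero {k : ℕ} (hk : k = 2 ∨ k = 4) :
    U₅ k (f₁ ^ 3) = 0 := by
  ext t
  rw [coeff_dissect, coeff_pentagonalSeries_cube, map_zero,
    if_neg (not_isSquare_of_mod_five (by lia))]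

theorem pentagonalSeries_eq_sum_dissect :
    f₁ = σ₅ (U₅ 0 f₁) + X * σ₅ (σ₅ f₁) + X ^ 2 * σ₅ (U₅ 2 f₁) := by
  conv_lhs => rw [← sum_X_pow_mul_expand_dissect (by norm_num : 5 ≠ 0) f₁]
  simp only [Finset.sum_range_succ, Finset.sum_range_zero, dissect_one_pentagonalSeries,
    dissect_pentagonalSeries_eq_zero, true_or, or_true, map_zero, mul_zero, add_zero, zero_add,
    pow_zero, one_mul, pow_one]

theorem constantCoeff_dissect_zero_pentagonalSeries : constantCoeff (U₅ 0 f₁) = 1 := by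
  rw [← coeff_zero_eq_constantCoeff_apply, coeff_dissect, coeff_pentagonalSeries_zmod_two]
  simp

theorem dissect_sq {k r c : ℕ} (hk : k < 5) (h : 2 * k = r + 5 * c) (F : (ZMod 2)⟦X⟧) :
    U₅ r (F ^ 2) = X ^ c * U₅ k F ^ 2 := by
  rw [pow_char_eq_expand, pow_char_eq_expand,
    dissect_expand_of_coprime _ (by norm_num) hk h]

theorem dissect_two_cube (F : (ZMod 2)⟦X⟧) :
    U₅ 2 (F ^ 3) = U₅ 0 F * U₅ 1 F ^ 2 + U₅ 2 F * U₅ 0 F ^ 2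
      + X * (U₅ 1 F * U₅ 3 F ^ 2 + U₅ 3 F * U₅ 2 F ^ 2) + X ^ 2 * U₅ 4 F ^ 3 := by
  have hshift {k i r c d : ℕ} (hi : i < 5) (hr : r < 5) (hrk : r + k = 2 + 5 * c)
      (hri : 2 * i = r + 5 * d) : U₅ 2 (X ^ k * (σ₅ (U₅ k F) * F ^ 2)) =
        X ^ (c + d) * (U₅ k F * U₅ i F ^ 2) := by
    rw [mul_left_comm, dissect_expand_mul (by norm_num), dissect_X_pow_mul hr hrk,
      dissect_sq hi hri]
    ring
  calc U₅ 2 (F ^ 3)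
      = ∑ k ∈ Finset.range 5, U₅ 2 (X ^ k * (σ₅ (U₅ k F) * F ^ 2)) := by
        rw [← map_sum, pow_succ' F 2]
        conv_lhs => rw [← sum_X_pow_mul_expand_dissect (by norm_num : 5 ≠ 0) F, Finset.sum_mul]
        simp only [mul_assoc, sum_X_pow_mul_expand_dissect]
    _ = _ := by
        simp only [Finset.sum_range_succ, Finset.sum_range_zero]
        rw [hshift (i := 1) (r := 2) (c := 0) (d := 0) (by norm_num) (by norm_num) rfl rfl,
          hshift (i := 3) (r := 1) (c := 0) (d := 1) (by norm_num) (by norm_num) rfl rfl,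
          hshift (i := 0) (r := 0) (c := 0) (d := 0) (by norm_num) (by norm_num) rfl rfl,
          hshift (i := 2) (r := 4) (c := 1) (d := 0) (by norm_num) (by norm_num) rfl rfl,
          hshift (i := 4) (r := 3) (c := 1) (d := 1) (by norm_num) (by norm_num) rfl rfl]
        ring

theorem dissect_zero_mul_dissect_two : U₅ 0 f₁ * U₅ 2 f₁ = σ₅ f₁ ^ 2 := by
  have hcube : U₅ 2 (f₁ ^ 3) = U₅ 0 f₁ * (U₅ 0 f₁ * U₅ 2 f₁ + σ₅ f₁ ^ 2) := by
    rw [dissect_two_cube, dissect_pentagonalSeries_eq_zero (.inl rfl),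
      dissect_pentagonalSeries_eq_zero (.inr rfl), dissect_one_pentagonalSeries]
    ring
  rw [dissect_pentagonalSeries_cube_eq_zero (.inl rfl)] at hcube
  have hne : U₅ 0 f₁ ≠ 0 := fun h ↦ by
    simpa [h] using constantCoeff_dissect_zero_pentagonalSeries
  exact CharTwo.add_eq_zero.1 ((mul_eq_zero.1 hcube.symm).resolve_left hne)

theorem expand_dissect_mul_eq_sq :
    σ₅ (U₅ 0 f₁) * (X ^ 2 * σ₅ (U₅ 2 f₁)) = (X * σ₅ (σ₅ f₁)) ^ 2 := by
  rw [mul_left_comm, ← map_mul, dissect_zero_mul_dissect_two, map_pow, mul_pow]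

theorem expand_modular_equation :
    σ₅ f₁ ^ 6 = σ₅ (σ₅ f₁) * (σ₅ f₁ + X ^ 5 * σ₅ (σ₅ f₁) ^ 5) := by
  have := congrArg σ₅ pentagonalSeries_modular_equation
  simp only [map_mul, map_add, map_pow, expand_X] at this
  grind

theorem quintic_norm_eq : U₅ 0 f₁ ^ 5 + X ^ 2 * U₅ 2 f₁ ^ 5 = f₁ := by
  have hu := pentagonalSeries_eq_sum_dissect
  have hprod := add_mul_add_pow_five_add_eq_zero (v := σ₅ f₁) expand_dissect_mul_eq_sq rfl
    (by rw [← hu]; exact pentagonalSeries_modular_equation) expand_modular_equation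
  have hne : σ₅ (U₅ 0 f₁) + X ^ 2 * σ₅ (U₅ 2 f₁) ≠ 0 := fun h ↦ by
    simpa [constantCoeff_dissect_zero_pentagonalSeries] using congrArg constantCoeff h
  have hsum := CharTwo.add_eq_zero.1 ((mul_eq_zero.1 hprod).resolve_left hne)
  refine expand_injective (m := 5) (by norm_num) ?_
  rw [hsum, map_add, map_mul, map_pow, map_pow, map_pow, expand_X, mul_pow, pow_right_comm]

/-- The product of the nontrivial conjugates of the pentagonal series under `X ↦ ζ X`, `ζ⁵ = 1`. -/
noncomputable def pentagonalCofactor : (ZMod 2)⟦X⟧ :=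
  quinticCofactor (σ₅ (U₅ 0 f₁)) (X * σ₅ (σ₅ f₁)) (X ^ 2 * σ₅ (U₅ 2 f₁))

local notation "N₅" => pentagonalCofactor

theorem dissect_pentagonalCofactor :
    U₅ 0 N₅ = U₅ 0 f₁ ^ 4 + X * (σ₅ f₁ ^ 3 * U₅ 2 f₁) ∧ U₅ 1 N₅ = U₅ 0 f₁ ^ 3 * σ₅ f₁ ∧
      U₅ 2 N₅ = X * (σ₅ f₁ * U₅ 2 f₁ ^ 3) ∧
      U₅ 3 N₅ = U₅ 0 f₁ * σ₅ f₁ ^ 3 + X * U₅ 2 f₁ ^ 4 ∧ U₅ 4 N₅ = σ₅ f₁ ^ 4 := by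
  let h : ℕ → (ZMod 2)⟦X⟧
    | 0 => U₅ 0 f₁ ^ 4 + X * (σ₅ f₁ ^ 3 * U₅ 2 f₁)
    | 1 => U₅ 0 f₁ ^ 3 * σ₅ f₁
    | 2 => X * (σ₅ f₁ * U₅ 2 f₁ ^ 3)
    | 3 => U₅ 0 f₁ * σ₅ f₁ ^ 3 + X * U₅ 2 f₁ ^ 4
    | _ => σ₅ f₁ ^ 4
  have hN : N₅ = ∑ k ∈ Finset.range 5, X ^ k * σ₅ (h k) := by
    simp only [h, Finset.sum_range_succ, Finset.sum_range_zero, map_add, map_mul, map_pow,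
      expand_X, pentagonalCofactor, quinticCofactor]
    ring
  rw [hN]
  refine ⟨?_, ?_, ?_, ?_, ?_⟩ <;> exact dissect_sum_X_pow_mul_expand (by norm_num) h

theorem expand_expand_mul_pentagonalSeries_mul_cofactor :
    σ₅ (σ₅ f₁) * (f₁ * N₅) = σ₅ f₁ ^ 6 := by
  have hnorm := add_add_mul_quinticCofactor expand_dissect_mul_eq_sq
  rw [← pentagonalSeries_eq_sum_dissect] at hnorm
  have hv := congrArg σ₅ quintic_norm_eq
  simp only [map_add, map_mul, map_pow, expand_X] at hv
  rw [pentagonalCofactor, hnorm, expand_modular_equation]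
  linear_combination σ₅ (σ₅ f₁) * hv

theorem pentagonalSeries_mul_inv : f₁ * f₁⁻¹ = 1 :=
  PowerSeries.mul_inv_cancel _ (by
    rw [← coeff_zero_eq_constantCoeff_apply, coeff_pentagonalSeries_zmod_two]; simp)

theorem inv_pentagonalSeries_eq : f₁⁻¹ = σ₅ (σ₅ f₁ * f₁⁻¹ ^ 6) * N₅ := by
  have hinv : σ₅ f₁ * σ₅ f₁⁻¹ = 1 := by rw [← map_mul, pentagonalSeries_mul_inv, map_one]
  have hinv6 : (σ₅ f₁ * σ₅ f₁⁻¹) ^ 6 = 1 := by rw [hinv, one_pow]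
  have hone := pentagonalSeries_mul_inv
  rw [map_mul, map_pow]
  linear_combination -f₁⁻¹ * hinv6
    - σ₅ f₁⁻¹ ^ 6 * f₁⁻¹ * expand_expand_mul_pentagonalSeries_mul_cofactor
    + σ₅ f₁⁻¹ ^ 6 * σ₅ (σ₅ f₁) * N₅ * hone

theorem dissect_four_inv_pentagonalSeries : U₅ 4 f₁⁻¹ = σ₅ f₁ ^ 5 * f₁⁻¹ ^ 6 := by
  obtain ⟨-, -, -, -, h⟩ := dissect_pentagonalCofactor
  rw [inv_pentagonalSeries_eq, dissect_expand_mul (by norm_num), h,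
    ← inv_pentagonalSeries_eq]
  ring

theorem dissect_two_cofactor_cube :
    U₅ 2 (N₅ ^ 3) = X ^ 2 * σ₅ f₁ ^ 12 + X * σ₅ f₁ ^ 6 * f₁ ^ 6 + f₁ ^ 12 := by
  obtain ⟨h0, h1, h2, h3, h4⟩ := dissect_pentagonalCofactor
  rw [dissect_two_cube, h0, h1, h2, h3, h4]
  exact quintic_cofactor_cube_identity dissect_zero_mul_dissect_two quintic_norm_eq
    pentagonalSeries_modular_equation

theorem dissect_four_sq (F : (ZMod 2)⟦X⟧) : U₅ 4 (F ^ 2) = U₅ 2 F ^ 2 := by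
  rw [dissect_sq (k := 2) (c := 0) (by norm_num) rfl, pow_zero, one_mul]

theorem dissect_four_dissect_four :
    U₅ 4 (U₅ 4 (σ₅ (σ₅ f₁) ^ 8 * f₁⁻¹)) = σ₅ f₁ ^ 6 * f₁ + X ^ 2 * σ₅ f₁ ^ 18 * f₁⁻¹ ^ 11
      + X ^ 4 * σ₅ f₁ ^ 30 * f₁⁻¹ ^ 23 := by
  have hg (k : ℕ) : f₁ ^ k * f₁⁻¹ ^ k = 1 := by
    rw [← mul_pow, pentagonalSeries_mul_inv, one_pow]
  have hinner : U₅ 4 (σ₅ (σ₅ f₁) ^ 8 * f₁⁻¹) = σ₅ (f₁ ^ 13) * (f₁⁻¹ ^ 3) ^ 2 := by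
    rw [← map_pow, dissect_expand_mul (by norm_num), dissect_four_inv_pentagonalSeries, map_pow]
    ring
  have hcube : U₅ 2 (f₁⁻¹ ^ 3) = σ₅ f₁ ^ 3 * f₁⁻¹ ^ 18
      * (X ^ 2 * σ₅ f₁ ^ 12 + X * σ₅ f₁ ^ 6 * f₁ ^ 6 + f₁ ^ 12) := by
    conv_lhs => rw [inv_pentagonalSeries_eq, mul_pow, ← map_pow]
    rw [dissect_expand_mul (by norm_num), dissect_two_cofactor_cube]
    ring
  rw [hinner, dissect_expand_mul (by norm_num), dissect_four_sq, hcube, mul_pow, CharTwo.add_sq,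
    CharTwo.add_sq]
  linear_combination σ₅ f₁ ^ 6 * f₁ * hg 36 + X ^ 2 * σ₅ f₁ ^ 18 * f₁⁻¹ ^ 11 * hg 25
    + X ^ 4 * σ₅ f₁ ^ 30 * f₁⁻¹ ^ 23 * hg 13

theorem sq_mul_dissect_four_dissect_four :
    X ^ 2 * U₅ 4 (U₅ 4 (σ₅ (σ₅ f₁) ^ 8 * f₁⁻¹)) =
      X ^ 2 * (σ₅ f₁ ^ 6 * f₁) + f₁⁻¹ ^ 17 + σ₅ (f₁⁻¹ ^ 4) * f₁ ^ 3 := by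
  have hg (k : ℕ) : f₁ ^ k * f₁⁻¹ ^ k = 1 := by
    rw [← mul_pow, pentagonalSeries_mul_inv, one_pow]
  have hs (k : ℕ) : σ₅ f₁ ^ k * σ₅ f₁⁻¹ ^ k = 1 := by
    rw [← map_pow, ← map_pow, ← map_mul, hg, map_one]
  have hpoly := pow_twenty_six_mul_sq_eq pentagonalSeries_modular_equation
  rw [dissect_four_dissect_four, map_pow]
  linear_combination f₁⁻¹ ^ 23 * σ₅ f₁⁻¹ ^ 6 * hpoly - X ^ 6 * σ₅ f₁ ^ 30 * f₁⁻¹ ^ 23 * hs 6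
    - X ^ 4 * σ₅ f₁ ^ 18 * f₁⁻¹ ^ 11 * (σ₅ f₁ ^ 6 * σ₅ f₁⁻¹ ^ 6 * hg 12 + hs 6)
    - f₁⁻¹ ^ 17 * (σ₅ f₁ ^ 6 * σ₅ f₁⁻¹ ^ 6 * hg 6 + hs 6)
    + σ₅ f₁⁻¹ ^ 4 * f₁ ^ 3 * (σ₅ f₁ ^ 2 * σ₅ f₁⁻¹ ^ 2 * hg 23 + hs 2)
    - f₁⁻¹ ^ 17 * CharTwo.two_eq_zero (R := (ZMod 2)⟦X⟧)

theorem coeff_expand_mul_pentagonalSeries_cube (F : (ZMod 2)⟦X⟧) {n : ℕ}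
    (hn : n % 5 = 2 ∨ n % 5 = 4) : coeff n (σ₅ F * f₁ ^ 3) = 0 := by
  have h : U₅ (n % 5) (σ₅ F * f₁ ^ 3) = 0 := by
    rw [dissect_expand_mul (Nat.mod_lt n (by norm_num)),
      dissect_pentagonalSeries_cube_eq_zero hn, mul_zero]
  have := congrArg (coeff (n / 5)) h
  rwa [coeff_dissect, Nat.div_add_mod, map_zero] at this

theorem coeff_pow_eight_mul_inv {m : ℕ} (hm : m % 5 = 0 ∨ m % 5 = 2) :
    coeff (25 * m + 24) (σ₅ (σ₅ f₁) ^ 8 * f₁⁻¹) =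
      coeff m (σ₅ f₁ ^ 6 * f₁) + coeff (m + 2) (f₁⁻¹ ^ 17) := by
  have h := congrArg (coeff (m + 2)) sq_mul_dissect_four_dissect_four
  rw [map_add, map_add, coeff_X_pow_mul, coeff_X_pow_mul, coeff_dissect, coeff_dissect,
    coeff_expand_mul_pentagonalSeries_cube _ (by lia), add_zero] at h
  rw [← h]
  congr 2
  ring

theorem exists_eq_sq_add_of_coeff_ne_zero {m : ℕ} (h : coeff m (σ₅ f₁ ^ 6 * f₁) ≠ 0) :
    ∃ a b : ℕ, 24 * m + 31 = a ^ 2 + 30 * b ^ 2 := by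
  rw [← map_pow, coeff_mul] at h
  obtain ⟨⟨i, j⟩, hij, hne⟩ := Finset.exists_ne_zero_of_sum_ne_zero h
  rw [Finset.HasAntidiagonal.mem_antidiagonal] at hij
  rw [coeff_expand, coeff_pentagonalSeries_pow_six, coeff_pentagonalSeries_zmod_two] at hne
  simp only [ne_eq, mul_eq_zero, ite_eq_right_iff, one_ne_zero, imp_false, not_or, not_forall,
    not_not] at hne
  obtain ⟨⟨⟨l, rfl⟩, b, hb⟩, a, ha⟩ := hne
  rw [Nat.mul_div_cancel_left _ (by norm_num)] at hb
  exact ⟨a, b, by lia⟩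

theorem mk_numMultipartitions_zmod_two (t : ℕ) :
    (mk fun n ↦ (numMultipartitions t n : ZMod 2)) = f₁⁻¹ ^ t := by
  rw [mk_numMultipartitions, ← mul_one (mk _), ← pentagonalSeries_mul_inv, ← mul_assoc,
    mk_card_partition_mul_pentagonalSeries, one_mul]

theorem mk_numRegularPartitions_two_hundred :
    (mk fun n ↦ (numRegularPartitions 200 n : ZMod 2)) = σ₅ (σ₅ f₁) ^ 8 * f₁⁻¹ := by
  have h : expand 200 (by norm_num) f₁ = σ₅ (σ₅ f₁) ^ 8 := by
    rw [show 8 = 2 * 2 * 2 from rfl, pow_mul, pow_mul, pow_char_eq_expand,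
      pow_char_eq_expand, pow_char_eq_expand]
    simp only [← expand_mul]
  rw [← h, ← mk_numRegularPartitions_mul_pentagonalSeries, mul_assoc, pentagonalSeries_mul_inv,
    mul_one]

theorem exists_eq_sq_add_of_not_modEq {m : ℕ} (hm : m % 5 = 0 ∨ m % 5 = 2)
    (h : ¬numRegularPartitions 200 (25 * m + 24) ≡ numMultipartitions 17 (m + 2) [MOD 2]) :
    ∃ a b : ℕ, 24 * m + 31 = a ^ 2 + 30 * b ^ 2 := by
  refine exists_eq_sq_add_of_coeff_ne_zero fun h0 ↦ h ?_
  have hcoeff := coeff_pow_eight_mul_inv hm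
  rw [h0, zero_add, ← mk_numRegularPartitions_two_hundred, ← mk_numMultipartitions_zmod_two,
    coeff_mk, coeff_mk] at hcoeff
  exact (ZMod.natCast_eq_natCast_iff _ _ 2).1 hcoeff

end ModTwo

section PrimesInResidueClass

open ArithmeticFunction ArithmeticFunction.vonMangoldt Filter Topology

variable {q : ℕ} {a : ZMod q}

theorem sub_one_mul_residueClass_div_rpow_le (a : ZMod q) {x : ℝ} (hx : x ∈ Set.Ioc 1 2) (n : ℕ) :
    (x - 1) * (residueClass a n / (n : ℝ) ^ x) ≤
      (if n.Prime then 0 else residueClass a n) / n +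
        {p : ℕ | p.Prime ∧ (p : ZMod q) = a}.indicator (fun p ↦ 1 / (p : ℝ)) n := by
  obtain rfl | hn := n.eq_zero_or_pos
  · simp [Set.indicator_apply]
  have hn' : (0 : ℝ) < n := mod_cast hn
  have hx0 : 0 < x - 1 := sub_pos.2 hx.1
  by_cases ha : (n : ZMod q) = a
  swap
  · simp [residueClass, ha]
  by_cases hp : n.Prime
  · have hlog : (x - 1) * Real.log n ≤ (n : ℝ) ^ (x - 1) := by
      have := Real.log_le_rpow_div hn'.le hx0
      rwa [le_div_iff₀' hx0] at this
    have hpow : (n : ℝ) ^ x = (n : ℝ) ^ (x - 1) * n := by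
      rw [← Real.rpow_add_one hn'.ne', sub_add_cancel]
    calc (x - 1) * (residueClass a n / (n : ℝ) ^ x)
        = (x - 1) * Real.log n / (n : ℝ) ^ (x - 1) / n := by
          rw [residueClass, Set.indicator_of_mem (show n ∈ {m : ℕ | (m : ZMod q) = a} from ha),
            vonMangoldt_apply_prime hp, hpow]
          ring
      _ ≤ 1 / n := by
          gcongr
          exact div_le_one_of_le₀ hlog (by positivity)
      _ = _ := by simp [hp, ha]
  · have hdiv : residueClass a n / (n : ℝ) ^ x ≤ residueClass a n / n :=
      div_le_div_of_nonneg_left (residueClass_nonneg a n) hn'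
        (Real.self_le_rpow_of_one_le (mod_cast hn) hx.1.le)
    have hquot : 0 ≤ residueClass a n / (n : ℝ) ^ x :=
      div_nonneg (residueClass_nonneg a n) (by positivity)
    rw [if_neg hp, Set.indicator_of_notMem fun h ↦ hp h.1, add_zero]
    exact (mul_le_of_le_one_left hquot (by linarith [hx.2])).trans hdiv

theorem tendsto_sub_one_mul_tsum_residueClass_div_rpow
    (h : Summable ({p : ℕ | p.Prime ∧ (p : ZMod q) = a}.indicator fun p ↦ 1 / (p : ℝ))) :
    Tendsto (fun x : ℝ ↦ (x - 1) * ∑' n : ℕ, residueClass a n / (n : ℝ) ^ x) (𝓝[>] 1) (𝓝 0) := by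
  simp only [← tsum_mul_left]
  rw [← tsum_zero (β := ℕ)]
  refine tendsto_tsum_of_dominated_convergence ((summable_residueClass_non_primes_div a).add h)
    (fun n ↦ ?_) ?_
  · obtain rfl | hn := eq_or_ne n 0
    · simp [residueClass_apply_zero]
    have hcont : ContinuousAt (fun x : ℝ ↦ (x - 1) * (residueClass a n / (n : ℝ) ^ x)) 1 := by
      have hn' : (n : ℝ) ≠ 0 := mod_cast hn
      have : ContinuousAt (fun x : ℝ ↦ (n : ℝ) ^ x) 1 := Real.continuousAt_const_rpow hn'
      refine (continuousAt_id.sub continuousAt_const).mul (continuousAt_const.div this ?_)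
      simpa using hn'
    simpa using hcont.tendsto.mono_left nhdsWithin_le_nhds
  · filter_upwards [Ioc_mem_nhdsGT one_lt_two] with x hx n
    have hnonneg : 0 ≤ (x - 1) * (residueClass a n / (n : ℝ) ^ x) :=
      mul_nonneg (sub_nonneg.2 hx.1.le) (div_nonneg (residueClass_nonneg a n) (by positivity))
    rw [Real.norm_of_nonneg hnonneg]
    exact sub_one_mul_residueClass_div_rpow_le a hx n

/- Dirichlet's theorem gives `∑ Λ(n) / n ^ x ~ 1 / (φ(q) (x - 1))` over the class of `a`, whereas
convergence of `∑ 1 / p` would make this sum `o(1 / (x - 1))`. -/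
theorem not_summable_one_div_on_primes_residueClass [NeZero q] (ha : IsUnit a) :
    ¬ Summable ({p : ℕ | p.Prime ∧ (p : ZMod q) = a}.indicator fun p ↦ 1 / (p : ℝ)) := by
  intro h
  obtain ⟨C, hC⟩ := LSeries_residueClass_lower_bound ha
  have hlower : Tendsto (fun x : ℝ ↦ (q.totient : ℝ)⁻¹ - C * (x - 1)) (𝓝[>] 1)
      (𝓝 (q.totient : ℝ)⁻¹) := by
    have : Continuous fun x : ℝ ↦ (q.totient : ℝ)⁻¹ - C * (x - 1) := by fun_prop
    simpa using (this.tendsto 1).mono_left nhdsWithin_le_nhds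
  have hle : (q.totient : ℝ)⁻¹ ≤ 0 := by
    refine le_of_tendsto_of_tendsto hlower (tendsto_sub_one_mul_tsum_residueClass_div_rpow h) ?_
    filter_upwards [Ioc_mem_nhdsGT one_lt_two] with x hx
    have hx0 : 0 < x - 1 := sub_pos.2 hx.1
    calc (q.totient : ℝ)⁻¹ - C * (x - 1) = (x - 1) * ((q.totient : ℝ)⁻¹ / (x - 1) - C) := by
          field_simp
      _ ≤ _ := mul_le_mul_of_nonneg_left (hC hx) hx0.le
  exact hle.not_gt (inv_pos.2 (mod_cast Nat.totient_pos.2 (NeZero.pos q)))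

end PrimesInResidueClass

section Sieve

open Filter Topology

theorem one_sub_one_div_add_one_div_sq_le_exp {y : ℝ} (hy : 2 ≤ y) :
    1 - 1 / y + 1 / y ^ 2 ≤ Real.exp (-(1 / 2) * (1 / y)) := by
  have hinv : 1 / y ≤ 1 / 2 := one_div_le_one_div_of_le two_pos hy
  have hinv0 : 0 ≤ 1 / y := by positivity
  rw [← one_div_pow]
  nlinarith [Real.add_one_le_exp (-(1 / 2) * (1 / y))]

theorem one_sub_one_div_add_one_div_sq_nonneg {y : ℝ} (hy : 1 ≤ y) : 0 ≤ 1 - 1 / y + 1 / y ^ 2 :=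
  add_nonneg (sub_nonneg.2 (div_le_one_of_le₀ hy (by positivity))) (by positivity)

theorem exists_prod_one_sub_one_div_add_lt {s : Set ℕ} (hs : ∀ p ∈ s, 2 ≤ p)
    (hsum : ¬ Summable (s.indicator fun p ↦ 1 / (p : ℝ))) {ε : ℝ} (hε : 0 < ε) :
    ∃ Q : Finset ℕ, (∀ p ∈ Q, p ∈ s) ∧ ∏ p ∈ Q, (1 - 1 / (p : ℝ) + 1 / (p : ℝ) ^ 2) < ε := by
  classical
  have hnonneg (p : ℕ) : 0 ≤ s.indicator (fun p ↦ 1 / (p : ℝ)) p :=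
    Set.indicator_nonneg (fun p _ ↦ by positivity) p
  obtain ⟨N, hN⟩ := (((not_summable_iff_tendsto_nat_atTop_of_nonneg hnonneg).1 hsum).eventually
    (eventually_gt_atTop (-2 * Real.log ε))).exists
  set Q := (Finset.range N).filter (· ∈ s) with hQ
  have hQs : ∀ p ∈ Q, p ∈ s := fun p hp ↦ (Finset.mem_filter.1 hp).2
  have htwo (p : ℕ) (hp : p ∈ Q) : (2 : ℝ) ≤ p := mod_cast hs p (hQs p hp)
  have hsumQ : -2 * Real.log ε < ∑ p ∈ Q, 1 / (p : ℝ) := by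
    rw [hQ, Finset.sum_filter]
    simpa only [Set.indicator_apply] using hN
  refine ⟨Q, hQs, ?_⟩
  calc ∏ p ∈ Q, (1 - 1 / (p : ℝ) + 1 / (p : ℝ) ^ 2)
      ≤ ∏ p ∈ Q, Real.exp (-(1 / 2) * (1 / (p : ℝ))) :=
        Finset.prod_le_prod
          (fun p hp ↦ one_sub_one_div_add_one_div_sq_nonneg (one_le_two.trans (htwo p hp)))
          (fun p hp ↦ one_sub_one_div_add_one_div_sq_le_exp (htwo p hp))
    _ = Real.exp (-(1 / 2) * ∑ p ∈ Q, 1 / (p : ℝ)) := by rw [← Real.exp_sum, Finset.mul_sum]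
    _ < ε := by
        rw [← Real.lt_log_iff_exp_lt hε]
        linarith

theorem card_filter_range_sq_modEq_imp {p : ℕ} (hp : p ≠ 0) (r : ℕ) :
    ((Finset.range (p ^ 2)).filter fun n ↦ n ≡ r [MOD p] → n ≡ r [MOD p ^ 2]).card + p =
      p ^ 2 + 1 := by
  have hsq : 0 < p ^ 2 := by positivity
  have hclass : ((Finset.range (p ^ 2)).filter (· ≡ r [MOD p])).card = p := by
    rw [← Nat.count_eq_card_filter_range, Nat.count_modEq_card _ (Nat.pos_of_ne_zero hp), sq,
      Nat.mul_mod_right, Nat.mul_div_cancel_left _ (Nat.pos_of_ne_zero hp),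
      if_neg (Nat.not_lt_zero _), add_zero]
  have hsingle : (Finset.range (p ^ 2)).filter (· ≡ r [MOD p ^ 2]) = {r % p ^ 2} := by
    ext n
    simp only [Finset.mem_filter, Finset.mem_range, Finset.mem_singleton]
    constructor
    · rintro ⟨hn, hnr⟩
      rwa [Nat.ModEq, Nat.mod_eq_of_lt hn] at hnr
    · rintro rfl
      exact ⟨Nat.mod_lt _ hsq, Nat.mod_modEq _ _⟩
  have hunion : ((Finset.range (p ^ 2)).filter fun n ↦ n ≡ r [MOD p] → n ≡ r [MOD p ^ 2]) =
      (Finset.range (p ^ 2)).filter (fun n ↦ ¬ n ≡ r [MOD p]) ∪ {r % p ^ 2} := by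
    rw [← hsingle, ← Finset.filter_or]
    simp only [imp_iff_not_or]
  have hdisj : Disjoint ((Finset.range (p ^ 2)).filter fun n ↦ ¬ n ≡ r [MOD p]) {r % p ^ 2} := by
    rw [Finset.disjoint_singleton_right, Finset.mem_filter]
    exact fun h ↦ h.2 ((Nat.mod_modEq r (p ^ 2)).of_dvd (dvd_pow_self p two_ne_zero))
  have hsplit := Finset.card_filter_add_card_filter_not (s := Finset.range (p ^ 2)) (· ≡ r [MOD p])
  rw [hclass, Finset.card_range] at hsplit
  rw [hunion, Finset.card_union_of_disjoint hdisj, Finset.card_singleton]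
  omega

theorem card_le_of_forall_mod_mem {ι : Type*} {Q : Finset ι} {m : ι → ℕ}
    (hm : (Q : Set ι).Pairwise fun i j ↦ (m i).Coprime (m j)) {A : ι → Finset ℕ} {S : Finset ℕ}
    {x : ℕ} (hSx : ∀ n ∈ S, n ≤ x) (hSA : ∀ n ∈ S, ∀ i ∈ Q, n % m i ∈ A i) :
    S.card ≤ (x / ∏ i ∈ Q, m i + 1) * ∏ i ∈ Q, (A i).card := by
  classical
  rw [← Finset.card_range (x / _ + 1), ← Finset.card_pi, ← Finset.card_product]
  refine Finset.card_le_card_of_injOn (fun n ↦ (n / ∏ i ∈ Q, m i, fun i _ ↦ n % m i)) ?_ ?_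
  · intro n hn
    rw [Finset.mem_coe, Finset.mem_product, Finset.mem_range, Finset.mem_pi]
    exact ⟨Nat.lt_succ_of_le (Nat.div_le_div_right (hSx n hn)), hSA n hn⟩
  · intro a _ b _ hab
    rw [Prod.mk.injEq] at hab
    have hmod (i : ι) (hi : i ∈ Q) : a ≡ b [MOD m i] := congrFun (congrFun hab.2 i) hi
    have hprod : a ≡ b [MOD ∏ i ∈ Q, m i] := by
      rw [Nat.modEq_iff_dvd, Nat.cast_prod]
      exact Finset.prod_dvd_of_coprime (fun i hi j hj hij ↦ (hm hi hj hij).isCoprime)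
        fun i hi ↦ (hmod i hi).dvd
    rw [← Nat.div_add_mod a (∏ i ∈ Q, m i), ← Nat.div_add_mod b (∏ i ∈ Q, m i), hab.1,
      show a % _ = b % _ from hprod]

theorem card_le_mul_prod_of_modEq_imp_modEq_sq {Q : Finset ℕ} (hQ : ∀ p ∈ Q, p.Prime) {r : ℕ → ℕ}
    {S : Finset ℕ} {x : ℕ} (hSx : ∀ n ∈ S, n ≤ x)
    (hS : ∀ n ∈ S, ∀ p ∈ Q, n ≡ r p [MOD p] → n ≡ r p [MOD p ^ 2]) :
    (S.card : ℝ) ≤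
      (x + (∏ p ∈ Q, p ^ 2 : ℕ)) * ∏ p ∈ Q, (1 - 1 / (p : ℝ) + 1 / (p : ℝ) ^ 2) := by
  set M := ∏ p ∈ Q, p ^ 2 with hM
  set A : ℕ → Finset ℕ := fun p ↦
    (Finset.range (p ^ 2)).filter fun n ↦ n ≡ r p [MOD p] → n ≡ r p [MOD p ^ 2]
  have hcop : (Q : Set ℕ).Pairwise fun p p' ↦ (p ^ 2).Coprime (p' ^ 2) := fun p hp p' hp' hne ↦
    ((Nat.coprime_primes (hQ p hp) (hQ p' hp')).2 hne).pow 2 2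
  have hA (n : ℕ) (hn : n ∈ S) (p : ℕ) (hp : p ∈ Q) : n % p ^ 2 ∈ A p := by
    have hmod : n % p ^ 2 ≡ n [MOD p ^ 2] := Nat.mod_modEq n _
    refine Finset.mem_filter.2
      ⟨Finset.mem_range.2 (Nat.mod_lt _ (pow_pos (hQ p hp).pos 2)), fun h ↦ ?_⟩
    exact hmod.trans (hS n hn p hp ((hmod.of_dvd (dvd_pow_self p two_ne_zero)).symm.trans h))
  have hcard : (∏ p ∈ Q, ((A p).card : ℝ)) = M * ∏ p ∈ Q, (1 - 1 / (p : ℝ) + 1 / (p : ℝ) ^ 2) := by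
    rw [hM, Nat.cast_prod, ← Finset.prod_mul_distrib]
    refine Finset.prod_congr rfl fun p hp ↦ ?_
    have hp0 : (p : ℝ) ≠ 0 := mod_cast (hQ p hp).ne_zero
    have := card_filter_range_sq_modEq_imp (hQ p hp).ne_zero (r p)
    have : ((A p).card : ℝ) + p = p ^ 2 + 1 := mod_cast this
    push_cast
    field_simp
    linarith
  have hpos : 0 ≤ ∏ p ∈ Q, (1 - 1 / (p : ℝ) + 1 / (p : ℝ) ^ 2) := Finset.prod_nonneg fun p hp ↦
    one_sub_one_div_add_one_div_sq_nonneg (mod_cast (hQ p hp).one_le)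
  have hdiv : ((x / M : ℕ) : ℝ) * M ≤ x := mod_cast Nat.div_mul_le_self x M
  calc (S.card : ℝ) ≤ ((x / M : ℕ) + 1) * ∏ p ∈ Q, ((A p).card : ℝ) :=
        mod_cast card_le_of_forall_mod_mem hcop hSx hA
    _ = ((x / M : ℕ) * M + M) * ∏ p ∈ Q, (1 - 1 / (p : ℝ) + 1 / (p : ℝ) ^ 2) := by
        rw [hcard]; ring
    _ ≤ _ := by gcongr

theorem tendsto_card_filter_div_of_modEq_imp_modEq_sq {s : Set ℕ} (hs : ∀ p ∈ s, p.Prime)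
    (hsum : ¬ Summable (s.indicator fun p ↦ 1 / (p : ℝ))) {r : ℕ → ℕ} {P : ℕ → Prop}
    [DecidablePred P] (hP : ∀ n, P n → ∀ p ∈ s, n ≡ r p [MOD p] → n ≡ r p [MOD p ^ 2]) :
    Tendsto (fun x : ℕ ↦ (((Finset.Iic x).filter P).card : ℝ) / (x : ℝ)) atTop (𝓝 0) := by
  rw [Metric.tendsto_atTop]
  intro ε hε
  obtain ⟨Q, hQ, hlt⟩ :=
    exists_prod_one_sub_one_div_add_lt (fun p hp ↦ (hs p hp).two_le) hsum (half_pos hε)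
  set M := ∏ p ∈ Q, p ^ 2 with hM
  refine ⟨M + 1, fun x hx ↦ ?_⟩
  have hx0 : (0 : ℝ) < x := mod_cast (Nat.succ_pos M).trans_le hx
  have hxM : (M : ℝ) ≤ x := mod_cast (Nat.le_succ M).trans hx
  rw [Real.dist_eq, sub_zero, abs_of_nonneg (by positivity), div_lt_iff₀ hx0]
  calc (((Finset.Iic x).filter P).card : ℝ)
      ≤ (x + M) * ∏ p ∈ Q, (1 - 1 / (p : ℝ) + 1 / (p : ℝ) ^ 2) :=
        card_le_mul_prod_of_modEq_imp_modEq_sq (fun p hp ↦ hs p (hQ p hp))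
          (fun n hn ↦ Finset.mem_Iic.1 (Finset.mem_filter.1 hn).1)
          fun n hn p hp ↦ hP n (Finset.mem_filter.1 hn).2 p (hQ p hp)
    _ < (x + M) * (ε / 2) := by gcongr
    _ ≤ ε * x := by nlinarith

end Sieve

section QuadraticForm

open Filter Topology

theorem sq_dvd_sq_add_mul_sq_of_dvd {p : ℕ} (hp : p.Prime) {d : ℤ} (hd : jacobiSym (-d) p = -1)
    {a b : ℤ} (h : (p : ℤ) ∣ a ^ 2 + d * b ^ 2) : (p : ℤ) ^ 2 ∣ a ^ 2 + d * b ^ 2 := by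
  have : Fact p.Prime := ⟨hp⟩
  rw [← jacobiSym.legendreSym.to_jacobiSym] at hd
  obtain ⟨ha, hb⟩ := legendreSym.prime_dvd_of_eq_neg_one hd
    (show (p : ℤ) ∣ a ^ 2 - -d * b ^ 2 by rwa [neg_mul, sub_neg_eq_add])
  exact (pow_dvd_pow_of_dvd ha 2).add ((pow_dvd_pow_of_dvd hb 2).mul_left d)

theorem jacobiSym_neg_thirty_eq_neg_one {p : ℕ} (hp : p % 120 = 7) : jacobiSym (-30) p = -1 := by
  rw [jacobiSym.mod_right (-30) (Nat.odd_iff.2 (by omega)),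
    show 4 * (-30 : ℤ).natAbs = 120 from rfl, hp]
  norm_num

theorem exists_forall_dvd_mul_add_iff_modEq {k m : ℕ} (hk : k.Coprime m) (hm : m ≠ 0) (c : ℕ) :
    ∃ r, ∀ p, p ∣ m → ∀ n, p ∣ k * n + c ↔ n ≡ r [MOD p] := by
  have : NeZero m := ⟨hm⟩
  obtain ⟨r, hr⟩ : ∃ r, m ∣ k * r + c := by
    refine ⟨(-(c : ZMod m) * (k : ZMod m)⁻¹).val, ?_⟩
    rw [← ZMod.natCast_eq_zero_iff, Nat.cast_add, Nat.cast_mul, ZMod.natCast_val, ZMod.cast_id',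
      id_eq, mul_left_comm, ZMod.coe_mul_inv_eq_one k hk, mul_one, neg_add_cancel]
  refine ⟨r, fun p hp n ↦ ⟨fun h ↦ ?_, fun h ↦ ?_⟩⟩
  · have hmod : k * n + c ≡ k * r + c [MOD p] :=
      (Nat.modEq_zero_iff_dvd.2 h).trans (Nat.modEq_zero_iff_dvd.2 (hp.trans hr)).symm
    exact Nat.ModEq.cancel_left_of_coprime (hk.coprime_dvd_right hp).symm hmod.add_right_cancel'
  · exact (((h.mul_left k).add_right c).dvd_iff dvd_rfl).2 (hp.trans hr)

theorem tendsto_card_filter_div_of_eq_sq_add_mul_sq {s : Set ℕ} (hs : ∀ p ∈ s, p.Prime)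
    (hsum : ¬ Summable (s.indicator fun p ↦ 1 / (p : ℝ))) {d : ℤ}
    (hd : ∀ p ∈ s, jacobiSym (-d) p = -1) {k : ℕ} (hk : ∀ p ∈ s, k.Coprime p) {c : ℕ}
    {P : ℕ → Prop} [DecidablePred P]
    (hP : ∀ n, P n → ∃ a b : ℤ, ((k * n + c : ℕ) : ℤ) = a ^ 2 + d * b ^ 2) :
    Tendsto (fun x : ℕ ↦ (((Finset.Iic x).filter P).card : ℝ) / (x : ℝ)) atTop (𝓝 0) := by
  have hroot (p : ℕ) : ∃ r, p ∈ s → ∀ q, q ∣ p ^ 2 → ∀ n, q ∣ k * n + c ↔ n ≡ r [MOD q] := by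
    by_cases hp : p ∈ s
    · obtain ⟨r, hr⟩ := exists_forall_dvd_mul_add_iff_modEq ((hk p hp).pow_right 2)
        (pow_ne_zero 2 (hs p hp).ne_zero) c
      exact ⟨r, fun _ ↦ hr⟩
    · exact ⟨0, fun h ↦ absurd h hp⟩
  choose r hr using hroot
  refine tendsto_card_filter_div_of_modEq_imp_modEq_sq hs hsum (r := r) fun n hn p hp h ↦ ?_
  rw [← hr p hp p (dvd_pow_self p two_ne_zero)] at h
  rw [← hr p hp _ dvd_rfl]
  obtain ⟨a, b, hab⟩ := hP n hn
  have hsq : ((p ^ 2 : ℕ) : ℤ) ∣ ((k * n + c : ℕ) : ℤ) := by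
    rw [← Int.natCast_dvd_natCast] at h
    rw [hab] at h ⊢
    exact mod_cast sq_dvd_sq_add_mul_sq_of_dvd (hs p hp) (hd p hp) h
  exact mod_cast hsq

theorem tendsto_card_filter_div_of_eq_sq_add_thirty_mul_sq {c : ℕ} {P : ℕ → Prop}
    [DecidablePred P] (hP : ∀ n, P n → ∃ a b : ℕ, 120 * n + c = a ^ 2 + 30 * b ^ 2) :
    Tendsto (fun x : ℕ ↦ (((Finset.Iic x).filter P).card : ℝ) / (x : ℝ)) atTop (𝓝 0) := by
  have hmod {p : ℕ} (hp : (p : ZMod 120) = 7) : p % 120 = 7 :=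
    (ZMod.natCast_eq_natCast_iff p 7 120).1 hp
  have hunit : IsUnit (7 : ZMod 120) := (ZMod.isUnit_iff_coprime 7 120).2 (by norm_num)
  refine tendsto_card_filter_div_of_eq_sq_add_mul_sq (d := 30) (k := 120) (c := c)
    (fun p hp ↦ hp.1) (not_summable_one_div_on_primes_residueClass hunit)
    (fun p hp ↦ jacobiSym_neg_thirty_eq_neg_one (hmod hp.2)) (fun p hp ↦ ?_) fun n hn ↦ ?_
  · rw [Nat.Coprime, Nat.gcd_rec, hmod hp.2]
    norm_num
  · obtain ⟨a, b, hab⟩ := hP n hn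
    exact ⟨a, b, by rw [hab]; push_cast; rfl⟩

end QuadraticForm

open scoped Classical in
theorem stmt_14 :
    Filter.Tendsto (fun x : ℕ =>
      (((Finset.Iic x).filter (fun n =>
        ¬ numRegularPartitions 200 (125 * n + 24) ≡
            numMultipartitions 17 (5 * n + 2) [MOD 2])).card : ℝ) / (x : ℝ))
      Filter.atTop (nhds 0) ∧
    Filter.Tendsto (fun x : ℕ =>
      (((Finset.Iic x).filter (fun n =>
        ¬ numRegularPartitions 200 (125 * n + 74) ≡
            numMultipartitions 17 (5 * n + 4) [MOD 2])).card : ℝ) / (x : ℝ))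
      Filter.atTop (nhds 0) := by
  constructor
  · refine tendsto_card_filter_div_of_eq_sq_add_thirty_mul_sq (c := 31) fun n hn ↦ ?_
    obtain ⟨a, b, hab⟩ := exists_eq_sq_add_of_not_modEq (m := 5 * n) (by lia)
      (by rwa [show 25 * (5 * n) + 24 = 125 * n + 24 by ring])
    exact ⟨a, b, by lia⟩
  · refine tendsto_card_filter_div_of_eq_sq_add_thirty_mul_sq (c := 79) fun n hn ↦ ?_
    obtain ⟨a, b, hab⟩ := exists_eq_sq_add_of_not_modEq (m := 5 * n + 2) (by lia)
      (by rwa [show 25 * (5 * n + 2) + 24 = 125 * n + 74 by ring])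
    exact ⟨a, b, by lia⟩
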